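/- arXiv:2305.19891 — 2 statements merged into one kernel-verified Lean document; each statement's English description precedes it below -/
import Mathlib

section
/- Fix a base action ā ∈ ℝ^N, a scaling constant ε > 0, and a neighborhood depth d ≥ 1 (a natural number). Let A'' = { ā + d·ε·e_i : i ∈ {1,…,N} } ∪ { ā − d·ε·e_i : i ∈ {1,…,N} } be the set of maximally perturbed actions, where e_i is the i-th standard basis vector, and let A' = { ā + m·ε·e_i : i ∈ {1,…,N}, m ∈ {1,…,d} } ∪ { ā − m·ε·e_i : i ∈ {1,…,N}, m ∈ {1,…,d} } be the neighborhood of ā. If f : ℝ^N → ℝ is concave on the convex hull of A'' (i.e., f is locally upward convex on the neighborhood), then for every a' ∈ A', f(a') ≥ min over a'' ∈ A'' of f(a''). -/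
section Quasiconcave

variable {𝕜 E β : Type*} [Semiring 𝕜] [PartialOrder 𝕜] [AddCommMonoid E] [SMul 𝕜 E]
  [LinearOrder β]

theorem quasiconcaveOn_min_le_of_mem_segment {s : Set E} {f : E → β}
    (hf : QuasiconcaveOn 𝕜 s f) {x y z : E} (hx : x ∈ s) (hy : y ∈ s)
    (hz : z ∈ segment 𝕜 x y) : min (f x) (f y) ≤ f z :=
  ((hf (min (f x) (f y))).segment_subset ⟨hx, min_le_left _ _⟩ ⟨hy, min_le_right _ _⟩ hz).2

end Quasiconcave

/-- The perturbations of a base action `a` by `±r` along a single direction `v i`. The directions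
need not be a basis; the paper's `A''` is the case of the standard basis and `r = d * ε`. -/
def directionalPerturbations {𝕜 E ι : Type*} [AddGroup E] [SMul 𝕜 E]
    (a : E) (v : ι → E) (r : 𝕜) : Set E :=
  {x | ∃ i, x = a + r • v i ∨ x = a - r • v i}

section Perturbations

variable {𝕜 E β ι : Type*} [Field 𝕜] [LinearOrder 𝕜] [IsStrictOrderedRing 𝕜]
  [AddCommGroup E] [Module 𝕜 E] [LinearOrder β]

theorem add_smul_mem_segment_of_abs_le_abs (a v : E) {r t : 𝕜} (ht : |t| ≤ |r|) :
    a + t • v ∈ segment 𝕜 (a - r • v) (a + r • v) := by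
  have ht_mem : t ∈ segment 𝕜 (-r) r := by
    rw [segment_eq_uIcc, Set.mem_uIcc]
    grind
  have h_line := Set.mem_image_of_mem (AffineMap.lineMap a (a + v)) ht_mem
  rw [image_segment] at h_line
  simpa [AffineMap.lineMap_apply, sub_eq_add_neg, add_comm] using h_line

theorem exists_mem_segment_of_mem_directionalPerturbations {a : E} {v : ι → E} {r t : 𝕜}
    (ht : |t| ≤ |r|) {x : E} (hx : x ∈ directionalPerturbations a v t) :
    ∃ i, x ∈ segment 𝕜 (a - r • v i) (a + r • v i) := by
  obtain ⟨i, rfl | rfl⟩ := hx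
  · exact ⟨i, add_smul_mem_segment_of_abs_le_abs a (v i) ht⟩
  · have h_neg : |-t| ≤ |r| := (abs_neg t).trans_le ht
    exact ⟨i, by simpa [sub_eq_add_neg] using add_smul_mem_segment_of_abs_le_abs a (v i) h_neg⟩

theorem dnc_worst_case_bound_general {a : E} {v : ι → E} {r t : 𝕜} {f : E → β}
    (hf : ∀ i, QuasiconcaveOn 𝕜 (segment 𝕜 (a - r • v i) (a + r • v i)) f)
    (ht : |t| ≤ |r|) {x : E} (hx : x ∈ directionalPerturbations a v t) :
    ∃ y ∈ directionalPerturbations a v r, f y ≤ f x := by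
  obtain ⟨i, hxi⟩ := exists_mem_segment_of_mem_directionalPerturbations ht hx
  have h_min : min (f (a - r • v i)) (f (a + r • v i)) ≤ f x :=
    quasiconcaveOn_min_le_of_mem_segment (hf i) (left_mem_segment ..) (right_mem_segment ..) hxi
  obtain h_minus | h_plus := min_le_iff.mp h_min
  · exact ⟨a - r • v i, ⟨i, .inr rfl⟩, h_minus⟩
  · exact ⟨a + r • v i, ⟨i, .inl rfl⟩, h_plus⟩

end Perturbations

/-- Lemma 2 of the paper: if `f` (the Q-value with the state fixed) is concave
(locally upward convex) on the convex hull of the set `A''` of maximally perturbed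
actions, then the worst-case value over the whole neighborhood `A'` of the base
action `ā` is bounded below by the minimum over the maximally perturbed actions:
every `a' ∈ A'` satisfies `f a' ≥ min_{a'' ∈ A''} f a''`. -/
theorem dnc_worst_case_bound
    (N : ℕ) (abar : EuclideanSpace ℝ (Fin N))
    (ε : ℝ) (hε : 0 < ε) (d : ℕ) (hd : 1 ≤ d)
    (A'' : Set (EuclideanSpace ℝ (Fin N)))
    (hA'' : A'' = {x | ∃ i : Fin N,
        x = abar + ((d : ℝ) * ε) • EuclideanSpace.single i (1 : ℝ) ∨
        x = abar - ((d : ℝ) * ε) • EuclideanSpace.single i (1 : ℝ)})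
    (A' : Set (EuclideanSpace ℝ (Fin N)))
    (hA' : A' = {x | ∃ i : Fin N, ∃ m : ℕ, 1 ≤ m ∧ m ≤ d ∧
        (x = abar + ((m : ℝ) * ε) • EuclideanSpace.single i (1 : ℝ) ∨
         x = abar - ((m : ℝ) * ε) • EuclideanSpace.single i (1 : ℝ))})
    (f : EuclideanSpace ℝ (Fin N) → ℝ)
    (hf : ConcaveOn ℝ (convexHull ℝ A'') f) :
    ∀ a' ∈ A', ∃ a'' ∈ A'', f a'' ≤ f a' := by
  subst hA'' hA'
  rintro a' ⟨i, m, -, hmd, ha'⟩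
  have h_size : |(m : ℝ) * ε| ≤ |(d : ℝ) * ε| :=
    abs_le_abs_of_nonneg (by positivity) (by gcongr)
  exact dnc_worst_case_bound_general (v := fun i ↦ EuclideanSpace.single i (1 : ℝ))
    (fun _ ↦ (convex_segment _ _).quasiconcaveOn_restrict hf.quasiconcaveOn
      (segment_subset_convexHull ⟨_, .inr rfl⟩ ⟨_, .inl rfl⟩)) h_size ⟨i, ha'⟩
end

section
/- Let N ≥ 1 and G ≥ 1, and let S = (Fin N → Fin G) be the finite set of N-dimensional action vectors with G possible values per coordinate. Let P be an S × S real matrix with all entries nonnegative such that P(a, a') > 0 whenever a and a' differ in at most one coordinate (in particular P(a, a) > 0 for all a). Then for every natural number τ ≥ N and all a, a' ∈ S, the (a, a') entry of the matrix power P^τ is strictly positive. -/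
/-!
The number of coordinates in which two actions differ is their Hamming distance. Overwriting one
wrong coordinate of the target with its value at the source gives an intermediate action one step
from the target and one unit closer to the source, so by induction every action within Hamming
distance `k` is reached in exactly `k` steps with positive weight; surplus steps are spent standing
still. The Hamming distance never exceeds the number of coordinates.
-/

section Hamming

variable {ι : Type*} [Fintype ι] {β : ι → Type*} [∀ i, DecidableEq (β i)] {x y : ∀ i, β i}

theorem hammingDist_le_one_iff [Nonempty ι] :
    hammingDist x y ≤ 1 ↔ ∃ i, ∀ j, j ≠ i → x j = y j := by
  simp only [hammingDist, Finset.card_le_one_iff_subset_singleton, Finset.subset_singleton_iff',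
    Finset.mem_filter_univ, ne_eq, not_imp_comm]

theorem hammingDist_update_left_le_one [DecidableEq ι] (x : ∀ i, β i) (i : ι) (b : β i) :
    hammingDist (Function.update x i b) x ≤ 1 :=
  have : Nonempty ι := ⟨i⟩
  hammingDist_le_one_iff.2 ⟨i, fun _ hj ↦ Function.update_of_ne hj b x⟩

theorem hammingDist_update_right_lt [DecidableEq ι] {i : ι} (hi : x i ≠ y i) :
    hammingDist x (Function.update y i (x i)) < hammingDist x y := by
  refine Finset.card_lt_card (Finset.ssubset_iff_of_subset ?_ |>.2 ⟨i, by simpa, by simp⟩)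
  intro j hj
  obtain rfl | hji := eq_or_ne j i
  · simpa using hi
  · simpa [hji] using hj

theorem exists_hammingDist_le_and_le_one {k : ℕ} (h : hammingDist x y ≤ k + 1) :
    ∃ z, hammingDist x z ≤ k ∧ hammingDist z y ≤ 1 := by
  classical
  obtain rfl | hxy := eq_or_ne x y
  · exact ⟨x, by simp⟩
  · obtain ⟨i, hi⟩ := Function.ne_iff.1 hxy
    exact ⟨Function.update y i (x i),
      Nat.le_of_lt_succ ((hammingDist_update_right_lt hi).trans_le h),
      hammingDist_update_left_le_one y i (x i)⟩

end Hamming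

theorem matrix_mul_apply_pos {l m n R : Type*} [Fintype m] [Semiring R] [PartialOrder R]
    [IsOrderedRing R] [PosMulStrictMono R] {A : Matrix l m R} {B : Matrix m n R}
    (hA : ∀ i j, 0 ≤ A i j) (hB : ∀ j k, 0 ≤ B j k) {i : l} {j : m} {k : n}
    (hij : 0 < A i j) (hjk : 0 < B j k) : 0 < (A * B) i k :=
  calc
    0 < A i j * B j k := mul_pos hij hjk
    _ ≤ ∑ j', A i j' * B j' k :=
      Finset.single_le_sum (f := fun j' ↦ A i j' * B j' k)
        (fun j' _ ↦ mul_nonneg (hA i j') (hB j' k)) (Finset.mem_univ j)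
    _ = (A * B) i k := Matrix.mul_apply.symm

theorem dnc_reachability_general {ι R : Type*} {β : ι → Type*} [Fintype ι] [DecidableEq ι]
    [∀ i, Fintype (β i)] [∀ i, DecidableEq (β i)]
    [Semiring R] [PartialOrder R] [IsOrderedRing R] [PosMulStrictMono R] [Nontrivial R]
    {P : Matrix (∀ i, β i) (∀ i, β i) R} (hP_nonneg : ∀ a b, 0 ≤ P a b)
    (hP_pos : ∀ a b, hammingDist a b ≤ 1 → 0 < P a b)
    {k : ℕ} {a b : ∀ i, β i} (hab : hammingDist a b ≤ k) : 0 < (P ^ k) a b := by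
  induction k generalizing b with
  | zero =>
    obtain rfl : a = b := hammingDist_eq_zero.1 (Nat.le_zero.1 hab)
    simp
  | succ k ih =>
    obtain ⟨c, hac, hcb⟩ := exists_hammingDist_le_and_le_one hab
    rw [pow_succ]
    exact matrix_mul_apply_pos (Matrix.pow_apply_nonneg hP_nonneg k) hP_nonneg
      (ih hac) (hP_pos c b hcb)

/-- Core reachability claim in the proof of Lemma 3: for the simulated-annealing
transition matrix `P` over the finite action grid `S = Fin N → Fin G`, if every pair
of actions differing in at most one coordinate has positive one-step transition
probability, then for every `τ ≥ N` all `τ`-step transition weights are positive. -/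
theorem dnc_reachability
    (N G : ℕ) (hN : 1 ≤ N) (hG : 1 ≤ G)
    (P : Matrix (Fin N → Fin G) (Fin N → Fin G) ℝ)
    (hP_nonneg : ∀ a a', 0 ≤ P a a')
    (hP_pos : ∀ a a' : Fin N → Fin G,
      (∃ i : Fin N, ∀ j : Fin N, j ≠ i → a j = a' j) → 0 < P a a') :
    ∀ τ : ℕ, N ≤ τ → ∀ a a' : Fin N → Fin G, 0 < (P ^ τ) a a' := by
  have : NeZero N := ⟨Nat.one_le_iff_ne_zero.1 hN⟩
  exact fun τ hτ a a' ↦ dnc_reachability_general hP_nonneg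
    (fun b c hbc ↦ hP_pos b c (hammingDist_le_one_iff.1 hbc))
    (hammingDist_le_card_fintype.trans (by simpa using hτ))
end
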